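/- Stein–Weiss estimate for the gradient of the Newtonian potential: for every s with −1/2 < s < 3/2 there is a constant C_s such that for every measurable f : ℝ³ → [0,∞], the function u(x) := ∫_{ℝ³} f(y)/|x−y|² dy satisfies ( ∫_{ℝ³} |x|^{2(s−1)} u(x)² dx )^{1/2} ≤ C_s ( ∫_{ℝ³} |x|^{2s} f(x)² dx )^{1/2} (both sides possibly infinite). -/

import Mathlib

open MeasureTheory
open scoped ENNReal

noncomputable section

abbrev E3 := EuclideanSpace ℝ (Fin 3)

/-!
In dimension `d`, rescaling `y = ‖x‖ z` shows that `∫ ‖y‖ ^ α * ‖x - y‖ ^ β dy` is at most a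
constant times `‖x‖ ^ (α + β + d)`, the constant being finite as soon as both singularities are
integrable and the integrand decays faster than `‖y‖ ^ (-d)`. Hence the kernel `‖x - y‖ ^ (γ - d)`
of the Riesz potential of order `γ` maps powers of the norm to powers of the norm, up to constants,
and Schur's test with the power `‖y‖ ^ (-(s + d / p))` as test function gives the weighted `L ^ p`
bound. The gradient of the Newtonian potential is the case `d = 3`, `γ = 1`, `p = 2`.
-/

open Metric Module
open scoped NNReal

section SchurTest

variable {X Y : Type*} [MeasurableSpace X] [MeasurableSpace Y]

lemma rpow_lintegral_mul_le {ν : Measure Y} {p : ℝ} (hp : 1 ≤ p) {g f : Y → ℝ≥0∞}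
    (hg : Measurable g) (hf : Measurable f) :
    (∫⁻ y, g y * f y ∂ν) ^ p ≤ (∫⁻ y, g y ∂ν) ^ (p - 1) * ∫⁻ y, g y * f y ^ p ∂ν := by
  have hp0 : 0 < p := zero_lt_one.trans_le hp
  have holder := eLpNorm'_le_eLpNorm'_mul_rpow_measure_univ one_pos hp
    (hf.aestronglyMeasurable (μ := ν.withDensity g))
  simp only [eLpNorm', enorm_eq_self, ENNReal.rpow_one, div_one,
    withDensity_apply _ MeasurableSet.univ, Measure.restrict_univ,
    lintegral_withDensity_eq_lintegral_mul ν hg hf,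
    lintegral_withDensity_eq_lintegral_mul ν hg (hf.pow_const p), Pi.mul_apply] at holder
  calc (∫⁻ y, g y * f y ∂ν) ^ p
      ≤ ((∫⁻ y, g y * f y ^ p ∂ν) ^ (1 / p) * (∫⁻ y, g y ∂ν) ^ (1 - 1 / p)) ^ p := by gcongr
    _ = (∫⁻ y, g y ∂ν) ^ (p - 1) * ∫⁻ y, g y * f y ^ p ∂ν := by
      rw [ENNReal.mul_rpow_of_nonneg _ _ hp0.le, ← ENNReal.rpow_mul, ← ENNReal.rpow_mul,
        one_div_mul_cancel hp0.ne', ENNReal.rpow_one, sub_mul, one_mul,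
        one_div_mul_cancel hp0.ne', mul_comm]

lemma rpow_lintegral_mul_le_of_lintegral_mul_le {ν : Measure Y} {p : ℝ} (hp : 1 ≤ p)
    {κ h f : Y → ℝ≥0∞} (hκ : Measurable κ) (hh : Measurable h) (hf : Measurable f)
    (h_ne_zero : ∀ᵐ y ∂ν, h y ≠ 0) (h_ne_top : ∀ᵐ y ∂ν, h y ≠ ∞) {a : ℝ≥0∞}
    (ha : ∫⁻ y, κ y * h y ∂ν ≤ a) :
    (∫⁻ y, κ y * f y ∂ν) ^ p ≤ a ^ (p - 1) * ∫⁻ y, κ y * (h y * (f y / h y) ^ p) ∂ν :=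
  calc (∫⁻ y, κ y * f y ∂ν) ^ p
      = (∫⁻ y, κ y * h y * (f y / h y) ∂ν) ^ p := by
        congr 1
        refine lintegral_congr_ae ?_
        filter_upwards [h_ne_zero, h_ne_top] with y h0 htop
        rw [mul_assoc, ENNReal.mul_div_cancel h0 htop]
    _ ≤ (∫⁻ y, κ y * h y ∂ν) ^ (p - 1) * ∫⁻ y, κ y * h y * (f y / h y) ^ p ∂ν :=
        rpow_lintegral_mul_le hp (by fun_prop) (by fun_prop)
    _ ≤ a ^ (p - 1) * ∫⁻ y, κ y * (h y * (f y / h y) ^ p) ∂ν := by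
        simp only [mul_assoc]
        gcongr

lemma schur_test_lintegral_rpow {μ : Measure X} {ν : Measure Y} [SFinite μ] [SFinite ν] {p : ℝ}
    (hp : 1 ≤ p) {K : X → Y → ℝ≥0∞} (hK : Measurable (Function.uncurry K))
    {v k : X → ℝ≥0∞} {w h : Y → ℝ≥0∞} (hv : Measurable v) (hk : Measurable k) (hh : Measurable h)
    (h_ne_zero : ∀ᵐ y ∂ν, h y ≠ 0) (h_ne_top : ∀ᵐ y ∂ν, h y ≠ ∞) {A B : ℝ≥0}
    (hA : ∀ᵐ x ∂μ, ∫⁻ y, K x y * h y ∂ν ≤ A * k x)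
    (hB : ∀ᵐ y ∂ν, ∫⁻ x, v x * k x ^ (p - 1) * K x y ∂μ ≤ B * (w y * h y ^ (p - 1)))
    {f : Y → ℝ≥0∞} (hf : Measurable f) :
    ∫⁻ x, v x * (∫⁻ y, K x y * f y ∂ν) ^ p ∂μ ≤
      (A ^ (p - 1) * B : ℝ≥0) * ∫⁻ y, w y * f y ^ p ∂ν := by
  have hp0 : 0 ≤ p - 1 := sub_nonneg.2 hp
  set g : Y → ℝ≥0∞ := fun y ↦ h y * (f y / h y) ^ p
  have hg : Measurable g := by fun_prop
  calc ∫⁻ x, v x * (∫⁻ y, K x y * f y ∂ν) ^ p ∂μ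
      ≤ ∫⁻ x, (A ^ (p - 1) : ℝ≥0) * ∫⁻ y, v x * k x ^ (p - 1) * K x y * g y ∂ν ∂μ := by
        refine lintegral_mono_ae ?_
        filter_upwards [hA] with x hx
        have hKx : Measurable (K x) := hK.of_uncurry_left
        have := rpow_lintegral_mul_le_of_lintegral_mul_le hp hKx hh hf h_ne_zero h_ne_top hx
        simp only [mul_assoc]
        rw [lintegral_const_mul _ (by fun_prop), lintegral_const_mul _ (by fun_prop),
          mul_left_comm, ENNReal.coe_rpow_of_nonneg _ hp0, ← mul_assoc (_ ^ _),
          ← ENNReal.mul_rpow_of_nonneg _ _ hp0]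
        gcongr
    _ = (A ^ (p - 1) : ℝ≥0) * ∫⁻ y, ∫⁻ x, v x * k x ^ (p - 1) * K x y * g y ∂μ ∂ν := by
        rw [lintegral_const_mul' _ _ ENNReal.coe_ne_top, lintegral_lintegral_swap (by fun_prop)]
    _ ≤ (A ^ (p - 1) : ℝ≥0) * ∫⁻ y, B * (w y * f y ^ p) ∂ν := by
        refine mul_le_mul' le_rfl (lintegral_mono_ae ?_)
        filter_upwards [hB, h_ne_zero, h_ne_top] with y hy h0 htop
        have hKy : Measurable fun x ↦ K x y := hK.of_uncurry_right
        calc ∫⁻ x, v x * k x ^ (p - 1) * K x y * g y ∂μ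
            = (∫⁻ x, v x * k x ^ (p - 1) * K x y ∂μ) * g y :=
              lintegral_mul_const _ (by fun_prop)
          _ ≤ B * (w y * h y ^ (p - 1)) * g y := by gcongr
          _ = B * (w y * (h y ^ (p - 1 + 1) * (f y / h y) ^ p)) := by
            rw [ENNReal.rpow_add _ _ h0 htop, ENNReal.rpow_one]
            ring
          _ = B * (w y * f y ^ p) := by
            rw [sub_add_cancel, ← ENNReal.mul_rpow_of_nonneg _ _ (by linarith),
              ENNReal.mul_div_cancel h0 htop]
    _ = (A ^ (p - 1) * B : ℝ≥0) * ∫⁻ y, w y * f y ^ p ∂ν := by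
        rw [lintegral_const_mul' _ _ ENNReal.coe_ne_top, ENNReal.coe_mul, mul_assoc]

end SchurTest

section NormPowers

variable {E : Type*} [NormedAddCommGroup E]

lemma rpow_enorm_le_of_enorm_le {α : ℝ} (hα : α ≤ 0) {y z : E} (hyz : ‖y‖ₑ ≤ ‖z‖ₑ) :
    ‖z‖ₑ ^ α ≤ 3 ^ (-α) * (‖y + z‖ₑ + ‖y‖ₑ) ^ α := by
  have sum_le : ‖y + z‖ₑ + ‖y‖ₑ ≤ 3 * ‖z‖ₑ :=
    calc ‖y + z‖ₑ + ‖y‖ₑ ≤ ‖y‖ₑ + ‖z‖ₑ + ‖y‖ₑ := by gcongr; exact enorm_add_le y z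
      _ ≤ ‖z‖ₑ + ‖z‖ₑ + ‖z‖ₑ := by gcongr
      _ = 3 * ‖z‖ₑ := by ring
  calc ‖z‖ₑ ^ α = 3 ^ (-α) * (3 * ‖z‖ₑ) ^ α := by
        rw [ENNReal.mul_rpow_of_ne_top (by simp) (by simp), ← mul_assoc,
          ← ENNReal.rpow_add _ _ (by simp) (by simp), neg_add_cancel, ENNReal.rpow_zero, one_mul]
    _ ≤ 3 ^ (-α) * (‖y + z‖ₑ + ‖y‖ₑ) ^ α := by
        gcongr 3 ^ (-α) * ?_
        rw [← neg_neg α, ENNReal.rpow_neg, ENNReal.rpow_neg (‖y + z‖ₑ + _)]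
        gcongr
        exact neg_nonneg.2 hα

/- At most one of the two singular factors matters at a time: the larger of `‖y‖` and `‖x - y‖` is
comparable to its sum with `‖x‖`. -/
lemma rpow_enorm_mul_rpow_enorm_sub_le {α β : ℝ} (hα : α ≤ 0) (hβ : β ≤ 0) (x y : E) :
    ‖y‖ₑ ^ α * ‖x - y‖ₑ ^ β ≤
      3 ^ (-β) * (‖y‖ₑ ^ α * (‖x‖ₑ + ‖y‖ₑ) ^ β) +
        3 ^ (-α) * (‖x - y‖ₑ ^ β * (‖x‖ₑ + ‖x - y‖ₑ) ^ α) := by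
  rcases le_total ‖y‖ₑ ‖x - y‖ₑ with hy | hy
  · refine le_add_right ?_
    have := rpow_enorm_le_of_enorm_le hβ hy
    rw [add_sub_cancel] at this
    rw [mul_left_comm]
    gcongr
  · refine le_add_left ?_
    have := rpow_enorm_le_of_enorm_le hα hy
    rw [sub_add_cancel] at this
    rw [mul_left_comm, mul_comm]
    gcongr

/- The two weights differ at the origin when `α < 0`: there `(0 : ℝ) ^ α = 0`, whereas
`(0 : ℝ≥0∞) ^ α = ∞`. -/
lemma lintegral_ofReal_rpow_norm_mul [MeasurableSpace E] (μ : Measure E) [NullSingletonClass μ]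
    (α : ℝ) (g : E → ℝ≥0∞) :
    ∫⁻ x, ENNReal.ofReal (‖x‖ ^ α) * g x ∂μ = ∫⁻ x, ‖x‖ₑ ^ α * g x ∂μ := by
  refine lintegral_congr_ae ?_
  filter_upwards [μ.ae_ne 0] with x hx
  rw [← ofReal_norm, ENNReal.ofReal_rpow_of_pos (norm_pos_iff.2 hx)]

end NormPowers

section RieszPotential

variable {E : Type*} [NormedAddCommGroup E] [NormedSpace ℝ E] [MeasurableSpace E] (μ : Measure E)

/-- The Riesz potential of order `γ` of `f`, without its usual normalising constant: the convolution
of `f` with `‖·‖ ^ (γ - d)`, where `d` is the dimension of `E`. For `γ < d` the kernel is infinite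
on the diagonal. -/
def rieszPotential (γ : ℝ) (f : E → ℝ≥0∞) (x : E) : ℝ≥0∞ :=
  ∫⁻ y, ‖x - y‖ₑ ^ (γ - finrank ℝ E) * f y ∂μ

lemma rieszPotential_eq_lintegral_div {γ : ℝ} (hγ : γ ≤ finrank ℝ E) (f : E → ℝ≥0∞) (x : E) :
    rieszPotential μ γ f x = ∫⁻ y, f y / ENNReal.ofReal (‖x - y‖ ^ (finrank ℝ E - γ)) ∂μ := by
  refine lintegral_congr fun y ↦ ?_
  rw [← ENNReal.ofReal_rpow_of_nonneg (norm_nonneg _) (sub_nonneg.2 hγ), ofReal_norm,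
    div_eq_mul_inv, ← ENNReal.rpow_neg, neg_sub, mul_comm]

end RieszPotential

section Haar

variable {E : Type*} [NormedAddCommGroup E] [NormedSpace ℝ E] [FiniteDimensional ℝ E]
  [MeasurableSpace E] [BorelSpace E] (μ : Measure E) [μ.IsAddHaarMeasure]

lemma integrable_rpow_norm_mul_rpow_one_add_norm {α β : ℝ} (hα0 : α ≤ 0)
    (hα : -(finrank ℝ E : ℝ) < α) (hαβ : α + β < -(finrank ℝ E : ℝ)) :
    Integrable (fun y : E ↦ ‖y‖ ^ α * (1 + ‖y‖) ^ β) μ := by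
  have finrank_pos : 0 < finrank ℝ E := Nat.cast_pos (α := ℝ).1 (by linarith)
  have hmeas : Measurable fun y : E ↦ ‖y‖ ^ α * (1 + ‖y‖) ^ β := by fun_prop
  have near : IntegrableOn (fun y : E ↦ ‖y‖ ^ α * (1 + ‖y‖) ^ β) (ball 0 1) μ := by
    refine integrableOn_ball_of_norm_le_rpow finrank_pos (C := 1) (neg_lt.1 hα)
      (ae_of_all _ fun y ↦ ?_) hmeas.aestronglyMeasurable
    rw [Real.norm_of_nonneg (by positivity), neg_neg, one_mul]
    exact mul_le_of_le_one_right (by positivity)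
      (Real.rpow_le_one_of_one_le_of_nonpos (by linarith [norm_nonneg y]) (by linarith))
  have far : IntegrableOn (fun y : E ↦ ‖y‖ ^ α * (1 + ‖y‖) ^ β) (ball 0 1)ᶜ μ := by
    have decay : Integrable (fun y : E ↦ 2 ^ (-α) * (1 + ‖y‖) ^ (α + β)) μ := by
      simpa only [neg_neg] using (integrable_one_add_norm (lt_neg.1 hαβ)).const_mul _
    refine decay.integrableOn.mono' hmeas.aestronglyMeasurable
      (ae_restrict_of_forall_mem measurableSet_ball.compl fun y hy ↦ ?_)
    have one_le : 1 ≤ ‖y‖ := by simpa using hy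
    rw [Real.norm_of_nonneg (by positivity), Real.rpow_add (by positivity), ← mul_assoc]
    gcongr
    calc ‖y‖ ^ α ≤ ((1 + ‖y‖) / 2) ^ α :=
          Real.rpow_le_rpow_of_nonpos (by positivity) (by linarith) hα0
      _ = 2 ^ (-α) * (1 + ‖y‖) ^ α := by
          rw [Real.div_rpow (by positivity) zero_le_two, Real.rpow_neg zero_le_two, div_eq_inv_mul]
  simpa only [Set.union_compl_self, integrableOn_univ] using near.union far

lemma lintegral_rpow_enorm_mul_rpow_one_add_enorm_ne_top {α β : ℝ} (hα0 : α ≤ 0)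
    (hα : -(finrank ℝ E : ℝ) < α) (hαβ : α + β < -(finrank ℝ E : ℝ)) :
    ∫⁻ y : E, ‖y‖ₑ ^ α * (1 + ‖y‖ₑ) ^ β ∂μ ≠ ∞ := by
  have : Nontrivial E := nontrivial_of_finrank_pos (R := ℝ)
    (Nat.cast_pos (α := ℝ).1 (by linarith))
  rw [← lintegral_ofReal_rpow_norm_mul]
  convert (integrable_rpow_norm_mul_rpow_one_add_norm μ hα0 hα hαβ).lintegral_lt_top.ne
    using 3 with y
  rw [ENNReal.ofReal_mul (by positivity),
    ← ENNReal.ofReal_rpow_of_pos (x := 1 + ‖y‖) (by positivity),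
    ENNReal.ofReal_add zero_le_one (norm_nonneg y), ENNReal.ofReal_one, ofReal_norm]

lemma lintegral_eq_rpow_mul_lintegral_comp_smul {r : ℝ} (hr : r ≠ 0) {F : E → ℝ≥0∞}
    (hF : Measurable F) :
    ∫⁻ y, F y ∂μ = ‖r‖ₑ ^ (finrank ℝ E : ℝ) * ∫⁻ z, F (r • z) ∂μ := by
  have hr_pow : ‖r‖ₑ ^ finrank ℝ E ≠ 0 := pow_ne_zero _ (enorm_ne_zero.2 hr)
  rw [← lintegral_map hF (measurable_const_smul r), Measure.map_addHaar_smul μ hr,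
    lintegral_smul_measure, smul_eq_mul, ← mul_assoc, ← Real.enorm_eq_ofReal_abs,
    enorm_inv (pow_ne_zero _ hr), enorm_pow, ENNReal.rpow_natCast,
    ENNReal.mul_inv_cancel hr_pow (by finiteness), one_mul]

lemma lintegral_rpow_enorm_mul_rpow_enorm_add_enorm (α β : ℝ) {x : E} (hx : x ≠ 0) :
    ∫⁻ y : E, ‖y‖ₑ ^ α * (‖x‖ₑ + ‖y‖ₑ) ^ β ∂μ =
      ‖x‖ₑ ^ (α + β + finrank ℝ E) * ∫⁻ y : E, ‖y‖ₑ ^ α * (1 + ‖y‖ₑ) ^ β ∂μ := by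
  have hx0 : ‖x‖ₑ ≠ 0 := enorm_ne_zero.2 hx
  have homogeneous (z : E) : ‖‖x‖ • z‖ₑ ^ α * (‖x‖ₑ + ‖‖x‖ • z‖ₑ) ^ β =
      ‖x‖ₑ ^ (α + β) * (‖z‖ₑ ^ α * (1 + ‖z‖ₑ) ^ β) := by
    rw [enorm_smul, enorm_norm, ← mul_one_add, ENNReal.mul_rpow_of_ne_top (by simp) (by simp),
      ENNReal.mul_rpow_of_ne_top (by simp) (by simp), ENNReal.rpow_add _ _ hx0 (by simp)]
    ring
  rw [lintegral_eq_rpow_mul_lintegral_comp_smul μ (norm_ne_zero_iff.2 hx) (by fun_prop),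
    lintegral_congr homogeneous, lintegral_const_mul _ (by fun_prop), ← mul_assoc, enorm_norm,
    ← ENNReal.rpow_add _ _ hx0 (by simp), add_comm (finrank ℝ E : ℝ)]

lemma exists_lintegral_rpow_enorm_mul_rpow_enorm_sub_le {α β : ℝ}
    (hα : -(finrank ℝ E : ℝ) < α) (hβ : -(finrank ℝ E : ℝ) < β)
    (hαβ : α + β < -(finrank ℝ E : ℝ)) :
    ∃ C : ℝ≥0, ∀ x : E, x ≠ 0 →
      ∫⁻ y, ‖y‖ₑ ^ α * ‖x - y‖ₑ ^ β ∂μ ≤ C * ‖x‖ₑ ^ (α + β + finrank ℝ E) := by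
  have hα0 : α ≤ 0 := by linarith
  have hβ0 : β ≤ 0 := by linarith
  set I : ℝ → ℝ → ℝ≥0∞ := fun α β ↦ ∫⁻ y : E, ‖y‖ₑ ^ α * (1 + ‖y‖ₑ) ^ β ∂μ
  have hIαβ : I α β ≠ ∞ := lintegral_rpow_enorm_mul_rpow_one_add_enorm_ne_top μ hα0 hα hαβ
  have hIβα : I β α ≠ ∞ :=
    lintegral_rpow_enorm_mul_rpow_one_add_enorm_ne_top μ hβ0 hβ (by rwa [add_comm])
  have hC : 3 ^ (-β) * I α β + 3 ^ (-α) * I β α ≠ ∞ := by finiteness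
  refine ⟨(3 ^ (-β) * I α β + 3 ^ (-α) * I β α).toNNReal, fun x hx ↦ ?_⟩
  rw [ENNReal.coe_toNNReal hC]
  calc ∫⁻ y, ‖y‖ₑ ^ α * ‖x - y‖ₑ ^ β ∂μ
      ≤ ∫⁻ y, 3 ^ (-β) * (‖y‖ₑ ^ α * (‖x‖ₑ + ‖y‖ₑ) ^ β) +
        3 ^ (-α) * (‖x - y‖ₑ ^ β * (‖x‖ₑ + ‖x - y‖ₑ) ^ α) ∂μ :=
      lintegral_mono (rpow_enorm_mul_rpow_enorm_sub_le hα0 hβ0 x)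
    _ = 3 ^ (-β) * ∫⁻ y, ‖y‖ₑ ^ α * (‖x‖ₑ + ‖y‖ₑ) ^ β ∂μ +
        3 ^ (-α) * ∫⁻ y, ‖y‖ₑ ^ β * (‖x‖ₑ + ‖y‖ₑ) ^ α ∂μ := by
      rw [lintegral_add_left (by fun_prop), lintegral_const_mul _ (by fun_prop),
        lintegral_const_mul _ (by fun_prop),
        lintegral_sub_left_eq_self (fun y ↦ ‖y‖ₑ ^ β * (‖x‖ₑ + ‖y‖ₑ) ^ α) x]
    _ = (3 ^ (-β) * I α β + 3 ^ (-α) * I β α) * ‖x‖ₑ ^ (α + β + finrank ℝ E) := by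
      rw [lintegral_rpow_enorm_mul_rpow_enorm_add_enorm μ _ _ hx,
        lintegral_rpow_enorm_mul_rpow_enorm_add_enorm μ _ _ hx, add_comm β α]
      ring

lemma exists_lintegral_rpow_enorm_mul_rieszPotential_rpow_le {p γ s : ℝ} (hp : 1 ≤ p) (hγ : 0 < γ)
    (hs : γ - finrank ℝ E / p < s) (hs' : s < finrank ℝ E - finrank ℝ E / p) :
    ∃ C : ℝ≥0, ∀ f : E → ℝ≥0∞, Measurable f →
      ∫⁻ x, ‖x‖ₑ ^ (p * (s - γ)) * rieszPotential μ γ f x ^ p ∂μ ≤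
        C * ∫⁻ x, ‖x‖ₑ ^ (p * s) * f x ^ p ∂μ := by
  set d : ℝ := (finrank ℝ E : ℝ)
  have hpd : p * (d / p) = d := mul_div_cancel₀ d (by positivity)
  have : Nontrivial E := nontrivial_of_finrank_pos (R := ℝ)
    (Nat.cast_pos (α := ℝ).1 (by linarith))
  obtain ⟨A, hA⟩ := exists_lintegral_rpow_enorm_mul_rpow_enorm_sub_le μ
    (α := -(s + d / p)) (β := γ - d) (by linarith) (by linarith) (by linarith)
  obtain ⟨B, hB⟩ := exists_lintegral_rpow_enorm_mul_rpow_enorm_sub_le μ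
    (α := s - γ - d + d / p) (β := γ - d) (by linarith) (by linarith) (by linarith)
  have rpow_mul_rpow_rpow {x : E} (hx : x ≠ 0) (a b c : ℝ) :
      ‖x‖ₑ ^ a * (‖x‖ₑ ^ b) ^ c = ‖x‖ₑ ^ (a + b * c) := by
    rw [← ENNReal.rpow_mul, ← ENNReal.rpow_add _ _ (enorm_ne_zero.2 hx) enorm_ne_top]
  refine ⟨A ^ (p - 1) * B, fun f hf ↦ schur_test_lintegral_rpow hp
    (K := fun x y ↦ ‖x - y‖ₑ ^ (γ - d)) (k := fun x ↦ ‖x‖ₑ ^ (-(s + d / p) + (γ - d) + d))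
    (h := fun y ↦ ‖y‖ₑ ^ (-(s + d / p))) (by fun_prop) (by fun_prop) (by fun_prop) (by fun_prop)
    ?_ ?_ ?_ ?_ hf⟩ <;> filter_upwards [μ.ae_ne 0] with x hx
  · simp [ENNReal.rpow_eq_zero_iff, hx]
  · simp [ENNReal.rpow_eq_top_iff, hx]
  · simpa only [mul_comm] using hA x hx
  · rw [rpow_mul_rpow_rpow hx]
    convert hB x hx using 1
    · refine lintegral_congr_ae ?_
      filter_upwards [μ.ae_ne 0] with y hy
      rw [rpow_mul_rpow_rpow hy, enorm_sub_rev]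
      congr 2
      linarith
    · congr 2
      linarith

theorem stein_weiss_gradient_newtonian_potential_general {p γ s : ℝ} (hp : 1 ≤ p) (hγ : 0 < γ)
    (hs : γ - finrank ℝ E / p < s) (hs' : s < finrank ℝ E - finrank ℝ E / p) :
    ∃ C : ℝ, 0 < C ∧ ∀ f : E → ℝ≥0∞, Measurable f →
      (∫⁻ x, ‖x‖ₑ ^ (p * (s - γ)) * rieszPotential μ γ f x ^ p ∂μ) ^ (1 / p) ≤
        ENNReal.ofReal C * (∫⁻ x, ‖x‖ₑ ^ (p * s) * f x ^ p ∂μ) ^ (1 / p) := by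
  obtain ⟨C, hC⟩ := exists_lintegral_rpow_enorm_mul_rieszPotential_rpow_le μ hp hγ hs hs'
  refine ⟨C ^ (1 / p) + 1, by positivity, fun f hf ↦ ?_⟩
  calc (∫⁻ x, ‖x‖ₑ ^ (p * (s - γ)) * rieszPotential μ γ f x ^ p ∂μ) ^ (1 / p)
      ≤ (C * ∫⁻ x, ‖x‖ₑ ^ (p * s) * f x ^ p ∂μ) ^ (1 / p) := by
        gcongr
        exact hC f hf
    _ = ENNReal.ofReal (C ^ (1 / p)) * (∫⁻ x, ‖x‖ₑ ^ (p * s) * f x ^ p ∂μ) ^ (1 / p) := by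
        rw [ENNReal.mul_rpow_of_nonneg _ _ (by positivity),
          ← ENNReal.ofReal_rpow_of_nonneg C.coe_nonneg (by positivity), ENNReal.ofReal_coe_nnreal]
    _ ≤ ENNReal.ofReal (C ^ (1 / p) + 1) * (∫⁻ x, ‖x‖ₑ ^ (p * s) * f x ^ p ∂μ) ^ (1 / p) := by
        gcongr
        linarith

end Haar

/-- Stein–Weiss estimate for the gradient of the Newtonian potential. -/
theorem stein_weiss_gradient_newtonian_potential (s : ℝ) (hs1 : -(1/2) < s) (hs2 : s < 3/2) :
    ∃ C : ℝ, 0 < C ∧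
      ∀ f : E3 → ℝ≥0∞, Measurable f →
        ∀ u : E3 → ℝ≥0∞, (∀ x, u x = ∫⁻ y : E3, f y / ENNReal.ofReal (‖x - y‖^2)) →
          (∫⁻ x : E3, ENNReal.ofReal (‖x‖ ^ (2*(s - 1))) * (u x)^2) ^ (1/2 : ℝ) ≤
            ENNReal.ofReal C *
              (∫⁻ x : E3, ENNReal.ofReal (‖x‖ ^ (2*s)) * (f x)^2) ^ (1/2 : ℝ) := by
  obtain ⟨C, hC, bound⟩ := stein_weiss_gradient_newtonian_potential_general (volume : Measure E3)
    (γ := 1) (s := s) one_le_two one_pos (by norm_num; linarith) (by norm_num; linarith)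
  refine ⟨C, hC, fun f hf u hu ↦ ?_⟩
  have hu' : u = rieszPotential volume 1 f := funext fun x ↦ by
    rw [hu, rieszPotential_eq_lintegral_div _ (by norm_num)]
    norm_num
  simpa only [hu', lintegral_ofReal_rpow_norm_mul, ENNReal.rpow_two] using bound f hf
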